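/- arXiv:math/0104131 — 2 statements merged into one kernel-verified Lean document; each statement's English description precedes it below -/
import Mathlib

section
/- Let m be a positive integer and let x, u : ℕ → ℚ be functions satisfying u(r)² = x(r) for every odd positive integer r. Then I_{2m}(y) = I_{2m}(v) + I_m(w), where y(r) := 0 for odd r and y(r) := x(r/2) for even r; v(r) := u(r) for odd r and v(r) := 0 for even r; and w(r) := 0 for odd r and w(r) := x(r) for even r. -/
open Finset

/-- Cycle index of the regular cyclic group of order `n`:
`I_n(x) = (1/n) * ∑_{r | n} φ(r) * x(r)^(n/r)`. -/
def cycleIndex (n : ℕ) (x : ℕ → ℚ) : ℚ :=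
  (1 / (n : ℚ)) * ∑ r ∈ n.divisors, (Nat.totient r : ℚ) * x r ^ (n / r)

/-!
Zero values of the function drop out of a cycle index, since the exponents `n / r` are positive. Let
`p` be prime. The divisors of `p * m` divisible by `p` are the products `p * s` with `s ∣ m`, and
`φ (p * s)` is `p * φ s` or `(p - 1) * φ s` according to whether `p ∣ s` or not. The divisors of
`p * m` prime to `p` are those of `m`, and there `u s ^ (p * m / s) = (u s ^ p) ^ (m / s)`. Hence
the index of order `p * m` of a function living on the multiples of `p` splits into a part over
these multiples and `p - 1` copies of a part over the integers prime to `p`: one copy when `p = 2`.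
-/

theorem sum_divisors_mul_filter_dvd {M : Type*} [AddCommMonoid M] {k : ℕ} (hk : k ≠ 0) (m : ℕ)
    (f : ℕ → M) : ∑ r ∈ (k * m).divisors with k ∣ r, f r = ∑ s ∈ m.divisors, f (k * s) := by
  have image_eq : {r ∈ (k * m).divisors | k ∣ r} = m.divisors.image (k * ·) := by
    ext r
    simp only [mem_filter, mem_image, Nat.mem_divisors]
    constructor
    · rintro ⟨⟨hrm, hm⟩, s, rfl⟩
      exact ⟨s, ⟨Nat.dvd_of_mul_dvd_mul_left hk.bot_lt hrm, right_ne_zero_of_mul hm⟩, rfl⟩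
    · rintro ⟨s, ⟨hsm, hm⟩, rfl⟩
      exact ⟨⟨Nat.mul_dvd_mul_left k hsm, mul_ne_zero hk hm⟩, dvd_mul_right k s⟩
  rw [image_eq, sum_image (mul_right_injective₀ hk).injOn]

theorem filter_coprime_divisors_mul {k : ℕ} (hk : k ≠ 0) (m : ℕ) :
    {r ∈ (k * m).divisors | k.Coprime r} = {r ∈ m.divisors | k.Coprime r} := by
  ext r
  simp only [mem_filter, Nat.mem_divisors, mul_ne_zero_iff, hk, ne_eq, not_false_eq_true, true_and]
  exact and_congr_left fun hkr => and_congr_left' hkr.symm.dvd_mul_left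

theorem sum_totient_prime_mul {R : Type*} [Ring R] {p : ℕ} (hp : p.Prime) (S : Finset ℕ)
    (f : ℕ → R) :
    ∑ s ∈ S, (Nat.totient (p * s) : R) * f s =
      (p - 1) * ∑ s ∈ S with p.Coprime s, (Nat.totient s : R) * f s +
        p * ∑ s ∈ S with p ∣ s, (Nat.totient s : R) * f s := by
  simp only [hp.coprime_iff_not_dvd]
  rw [← sum_filter_not_add_sum_filter S (p ∣ ·), mul_sum, mul_sum]
  congr 1 <;> refine sum_congr rfl fun s hs => ?_
  · rw [Nat.totient_mul_of_prime_of_not_dvd hp (mem_filter.mp hs).2, Nat.cast_mul,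
      Nat.cast_pred hp.pos, mul_assoc]
  · rw [Nat.totient_mul_of_prime_of_dvd hp (mem_filter.mp hs).2, Nat.cast_mul, mul_assoc]

theorem mul_cycleIndex_ite_zero {n : ℕ} (hn : n ≠ 0) (P : ℕ → Prop) [DecidablePred P]
    (x : ℕ → ℚ) :
    (n : ℚ) * cycleIndex n (fun r => if P r then x r else 0) =
      ∑ r ∈ n.divisors with P r, (Nat.totient r : ℚ) * x r ^ (n / r) := by
  rw [cycleIndex, ← mul_assoc, mul_one_div_cancel (Nat.cast_ne_zero.mpr hn), one_mul, sum_filter]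
  refine sum_congr rfl fun r hr => ?_
  have exponent_ne_zero : n / r ≠ 0 :=
    (Nat.div_pos (Nat.divisor_le hr) (Nat.pos_of_mem_divisors hr)).ne'
  split_ifs
  · rfl
  · rw [zero_pow exponent_ne_zero, mul_zero]

theorem mul_cycleIndex_mul_ite_coprime {k m : ℕ} (hk : k ≠ 0) (hm : m ≠ 0) (u : ℕ → ℚ) :
    (k : ℚ) * cycleIndex (k * m) (fun r => if k.Coprime r then u r else 0) =
      cycleIndex m (fun r => if k.Coprime r then u r ^ k else 0) := by
  apply mul_left_cancel₀ (Nat.cast_ne_zero (R := ℚ).mpr hm)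
  rw [← mul_assoc, mul_comm (m : ℚ), ← Nat.cast_mul,
    mul_cycleIndex_ite_zero (mul_ne_zero hk hm), mul_cycleIndex_ite_zero hm,
    filter_coprime_divisors_mul hk]
  refine sum_congr rfl fun r hr => ?_
  rw [← pow_mul, Nat.mul_div_assoc k (Nat.dvd_of_mem_divisors (mem_filter.mp hr).1)]

theorem mul_cycleIndex_mul_ite_dvd {k m : ℕ} (hk : k ≠ 0) (hm : m ≠ 0) (x : ℕ → ℚ) :
    ((k * m : ℕ) : ℚ) * cycleIndex (k * m) (fun r => if k ∣ r then x (r / k) else 0) =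
      ∑ s ∈ m.divisors, (Nat.totient (k * s) : ℚ) * x s ^ (m / s) := by
  rw [mul_cycleIndex_ite_zero (mul_ne_zero hk hm) (k ∣ ·) (fun r => x (r / k)),
    sum_divisors_mul_filter_dvd hk]
  simp only [Nat.mul_div_cancel_left _ hk.bot_lt, Nat.mul_div_mul_left _ _ hk.bot_lt]

theorem mul_cycleIndex_prime_mul_ite_dvd {p m : ℕ} (hp : p.Prime) (hm : m ≠ 0) (x : ℕ → ℚ) :
    (p : ℚ) * cycleIndex (p * m) (fun r => if p ∣ r then x (r / p) else 0) =
      (p - 1) * cycleIndex m (fun r => if p.Coprime r then x r else 0) +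
        p * cycleIndex m (fun r => if p ∣ r then x r else 0) := by
  apply mul_left_cancel₀ (Nat.cast_ne_zero (R := ℚ).mpr hm)
  calc (m : ℚ) * (p * cycleIndex (p * m) fun r => if p ∣ r then x (r / p) else 0)
      = ∑ s ∈ m.divisors, (Nat.totient (p * s) : ℚ) * x s ^ (m / s) := by
        rw [← mul_cycleIndex_mul_ite_dvd hp.ne_zero hm, Nat.cast_mul]
        ring
    _ = (p - 1) * ∑ s ∈ m.divisors with p.Coprime s, (Nat.totient s : ℚ) * x s ^ (m / s) +
          p * ∑ s ∈ m.divisors with p ∣ s, (Nat.totient s : ℚ) * x s ^ (m / s) :=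
        sum_totient_prime_mul hp m.divisors fun s => x s ^ (m / s)
    _ = m * ((p - 1) * cycleIndex m (fun r => if p.Coprime r then x r else 0) +
          p * cycleIndex m (fun r => if p ∣ r then x r else 0)) := by
        rw [← mul_cycleIndex_ite_zero hm, ← mul_cycleIndex_ite_zero hm]
        ring

theorem cycleIndex_two_mul_split_general {p m : ℕ} (hp : p.Prime) (hm : m ≠ 0) (x u : ℕ → ℚ)
    (h : ∀ r : ℕ, p.Coprime r → u r ^ p = x r) :
    cycleIndex (p * m) (fun r => if p ∣ r then x (r / p) else 0) =
      (p - 1) * cycleIndex (p * m) (fun r => if p.Coprime r then u r else 0) +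
        cycleIndex m (fun r => if p ∣ r then x r else 0) := by
  have pow_eq : (fun r => if p.Coprime r then u r ^ p else 0) =
      fun r => if p.Coprime r then x r else 0 :=
    funext fun r => ite_congr rfl (h r) fun _ => rfl
  apply mul_left_cancel₀ (Nat.cast_ne_zero (R := ℚ).mpr hp.ne_zero)
  rw [mul_cycleIndex_prime_mul_ite_dvd hp hm, ← pow_eq,
    ← mul_cycleIndex_mul_ite_coprime hp.ne_zero hm]
  ring

/-- If `u(r)² = x(r)` for odd positive `r`, then `I_{2m}(y) = I_{2m}(v) + I_m(w)`
where `y(r) = 0` for odd `r`, `y(r) = x(r/2)` for even `r`; `v(r) = u(r)` for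
odd `r`, `v(r) = 0` for even `r`; `w(r) = 0` for odd `r`, `w(r) = x(r)` for even `r`. -/
theorem cycleIndex_two_mul_split (m : ℕ) (hm : 0 < m) (x u : ℕ → ℚ)
    (h : ∀ r : ℕ, 0 < r → Odd r → u r ^ 2 = x r) :
    cycleIndex (2 * m) (fun r => if Odd r then 0 else x (r / 2)) =
      cycleIndex (2 * m) (fun r => if Odd r then u r else 0) +
        cycleIndex m (fun r => if Odd r then 0 else x r) := by
  have split := cycleIndex_two_mul_split_general Nat.prime_two hm.ne' x u fun r hr =>
    h r (Nat.coprime_two_left.mp hr).pos (Nat.coprime_two_left.mp hr)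
  have coeff_eq_one : ((2 : ℕ) : ℚ) - 1 = 1 := by norm_num
  simpa only [coeff_eq_one, one_mul, Nat.coprime_two_left, ← even_iff_two_dvd,
    ← Nat.not_odd_iff_even, ite_not] using split
end

section
/- Let p > 3 be a prime such that q = (p+1)/2 is also prime, and let p̃ denote the maximal odd divisor of p − 1. Then 4·C_u(p) = C_u(p+1) + 2·C̄_u(2p̃+1). -/
open Finset

/-- Number of undirected circulant graphs of odd prime order `p`:
`C_u(p) = (2/(p-1))·∑_{r | (p-1)/2} φ(r)·2^{(p-1)/(2r)}`. -/
def Cu (p : ℕ) : ℚ :=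
  (2 / ((p : ℚ) - 1)) *
    ∑ r ∈ ((p - 1) / 2).divisors,
      (Nat.totient r : ℚ) * (2 : ℚ) ^ ((p - 1) / (2 * r))

/-- Number of undirected circulant graphs of order `2q`, `q` an odd prime:
`C_u(2q) = 2·(2/(q-1))·∑_{r | (q-1)/2} φ(r)·4^{(q-1)/(2r)}`. -/
def CuTwice (q : ℕ) : ℚ :=
  2 * ((2 / ((q : ℚ) - 1)) *
    ∑ r ∈ ((q - 1) / 2).divisors,
      (Nat.totient r : ℚ) * (4 : ℚ) ^ ((q - 1) / (2 * r)))

/-- For odd `p̃`, `C̄_u(2p̃+1) = (1/p̃)·∑_{r | p̃} φ(r)·2^{p̃/r}`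
(the formula counting undirected circulants of order `2p̃+1` when that is prime). -/
def CuBar (pt : ℕ) : ℚ :=
  (1 / (pt : ℚ)) * ∑ r ∈ pt.divisors, (Nat.totient r : ℚ) * (2 : ℚ) ^ (pt / r)

/-!
Write `S x n = ∑ r ∣ n, φ r * x ^ (n / r)`, so that `C_u(2 n + 1) = S 2 n / n`,
`C_u(2 (2 n + 1)) = 2 * S 4 n / n` and `C̄_u(2 m + 1) = S 2 m / m`. If `ℓ ∤ m`, a divisor of
`ℓ ^ (a + 1) * m` either divides `ℓ ^ a * m` or is `ℓ ^ (a + 1) * s` with `s ∣ m`. Divisors of the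
first kind contribute `S (x ^ ℓ) (ℓ ^ a * m)` to `S x (ℓ ^ (a + 1) * m)`, and those of the second
kind contribute `φ (ℓ ^ (a + 1)) * S x m`. Since `q` is odd, `p - 1 = 2 * (q - 1)` is a multiple of
`4`, so `p - 1 = 2 * 2 ^ (a + 1) * p̃` and `q - 1 = 2 * 2 ^ a * p̃` for some `a`, and the theorem is
the case `ℓ = x = 2`, `m = p̃`.
-/

section DivisorSums

variable {M : Type*} [AddCommMonoid M]

lemma sum_divisors_mul_of_coprime {m n : ℕ} (hmn : m.Coprime n) (f : ℕ → M) :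
    ∑ r ∈ (m * n).divisors, f r = ∑ d ∈ m.divisors, ∑ s ∈ n.divisors, f (d * s) := by
  rw [Nat.divisors_mul, Finset.mul_def, sum_image hmn.mul_injOn_divisors, sum_product]

lemma sum_divisors_prime_pow_succ_mul {ℓ m : ℕ} (hℓ : ℓ.Prime) (hm : ¬ℓ ∣ m) (a : ℕ)
    (f : ℕ → M) :
    ∑ r ∈ (ℓ ^ (a + 1) * m).divisors, f r =
      ∑ r ∈ (ℓ ^ a * m).divisors, f r + ∑ s ∈ m.divisors, f (ℓ ^ (a + 1) * s) := by
  have hcop (j : ℕ) : (ℓ ^ j).Coprime m := (hℓ.coprime_iff_not_dvd.mpr hm).pow_left j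
  simp only [sum_divisors_mul_of_coprime (hcop _), Nat.sum_divisors_prime_pow hℓ]
  exact sum_range_succ _ _

end DivisorSums

section NecklaceSum

variable {R : Type*} [Semiring R]

/-- The Burnside sum `∑ r ∣ n, φ r * x ^ (n / r)` of the cyclic group of order `n`: for a natural
number `x` it is `n` times the number of necklaces of `n` beads in `x` colours. The
division by `n` is left out so that the sum makes sense over any semiring. -/
def necklaceSum (x : R) (n : ℕ) : R :=
  ∑ r ∈ n.divisors, (r.totient : R) * x ^ (n / r)

lemma sum_divisors_totient_mul_pow_mul_div (x : R) (c n : ℕ) :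
    ∑ r ∈ n.divisors, (r.totient : R) * x ^ (c * n / r) = necklaceSum (x ^ c) n := by
  refine sum_congr rfl fun r hr ↦ ?_
  rw [Nat.mul_div_assoc c (Nat.dvd_of_mem_divisors hr), pow_mul]

lemma sum_divisors_totient_mul_left_mul_pow_div (x : R) {c n : ℕ} (hc : c ≠ 0)
    (hcn : c.Coprime n) :
    ∑ s ∈ n.divisors, ((c * s).totient : R) * x ^ (c * n / (c * s)) =
      c.totient * necklaceSum x n := by
  rw [necklaceSum, mul_sum]
  refine sum_congr rfl fun s hs ↦ ?_
  rw [Nat.mul_div_mul_left _ _ (Nat.pos_of_ne_zero hc),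
    Nat.totient_mul (hcn.coprime_dvd_right (Nat.dvd_of_mem_divisors hs)), Nat.cast_mul, mul_assoc]

theorem necklaceSum_prime_pow_succ_mul (x : R) {ℓ m : ℕ} (hℓ : ℓ.Prime) (hm : ¬ℓ ∣ m) (a : ℕ) :
    necklaceSum x (ℓ ^ (a + 1) * m) =
      necklaceSum (x ^ ℓ) (ℓ ^ a * m) + (ℓ ^ (a + 1)).totient * necklaceSum x m := by
  have hcop : (ℓ ^ (a + 1)).Coprime m := (hℓ.coprime_iff_not_dvd.mpr hm).pow_left _
  rw [← sum_divisors_totient_mul_pow_mul_div x ℓ, ← mul_assoc, ← pow_succ',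
    ← sum_divisors_totient_mul_left_mul_pow_div x (pow_ne_zero _ hℓ.ne_zero) hcop]
  exact sum_divisors_prime_pow_succ_mul hℓ hm a _

end NecklaceSum

lemma Cu_two_mul_add_one (n : ℕ) : Cu (2 * n + 1) = necklaceSum 2 n / n := by
  simp only [Cu, necklaceSum, Nat.add_sub_cancel, Nat.mul_div_cancel_left n two_pos,
    Nat.mul_div_mul_left _ _ two_pos]
  push_cast
  ring

lemma CuTwice_two_mul_add_one (n : ℕ) : CuTwice (2 * n + 1) = 2 * (necklaceSum 4 n / n) := by
  simp only [CuTwice, necklaceSum, Nat.add_sub_cancel, Nat.mul_div_cancel_left n two_pos,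
    Nat.mul_div_mul_left _ _ two_pos]
  push_cast
  ring

lemma CuBar_eq_necklaceSum_div (m : ℕ) : CuBar m = necklaceSum 2 m / m :=
  one_div_mul_eq_div _ _

lemma four_mul_Cu_two_pow_mul_add_one (a : ℕ) {m : ℕ} (hm : Odd m) :
    4 * Cu (2 * (2 ^ (a + 1) * m) + 1) = CuTwice (2 * (2 ^ a * m) + 1) + 2 * CuBar m := by
  have hrec : necklaceSum (2 : ℚ) (2 ^ (a + 1) * m) =
      necklaceSum 4 (2 ^ a * m) + 2 ^ a * necklaceSum 2 m := by
    rw [necklaceSum_prime_pow_succ_mul 2 Nat.prime_two hm.not_two_dvd_nat,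
      Nat.totient_prime_pow_succ Nat.prime_two]
    norm_num
  have hm0 : (m : ℚ) ≠ 0 := Nat.cast_ne_zero.mpr hm.pos.ne'
  rw [Cu_two_mul_add_one, CuTwice_two_mul_add_one, CuBar_eq_necklaceSum_div, hrec]
  push_cast
  field_simp
  ring

theorem four_mul_Cu_general (p q k pt : ℕ) (hq : Odd q) (hpq : p + 1 = 2 * q) (hpt : Odd pt)
    (hfac : p - 1 = 2 ^ k * pt) :
    4 * Cu p = CuTwice q + 2 * CuBar pt := by
  obtain ⟨c, rfl⟩ := hq
  obtain ⟨a, rfl⟩ : ∃ a, k = a + 2 := by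
    obtain ⟨d, rfl⟩ := hpt
    match k with
    | 0 | 1 => omega
    | a + 2 => exact ⟨a, rfl⟩
  obtain rfl : c = 2 ^ a * pt := by
    rw [pow_add, mul_right_comm] at hfac
    omega
  obtain rfl : p = 2 * (2 ^ (a + 1) * pt) + 1 := by
    rw [pow_succ', mul_assoc]
    omega
  exact four_mul_Cu_two_pow_mul_add_one a hpt

/-- If `p > 3` and `q = (p+1)/2` are both prime and `p̃` is the maximal odd
divisor of `p - 1` (i.e. `p - 1 = 2^k·p̃` with `p̃` odd), then
`4·C_u(p) = C_u(p+1) + 2·C̄_u(2p̃+1)`. -/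
theorem four_mul_Cu (p q k pt : ℕ) (hp : p.Prime) (hp3 : 3 < p)
    (hq : q.Prime) (hpq : p + 1 = 2 * q) (hpt : Odd pt)
    (hfac : p - 1 = 2 ^ k * pt) :
    4 * Cu p = CuTwice q + 2 * CuBar pt :=
  four_mul_Cu_general p q k pt (hq.odd_of_ne_two (by omega)) hpq hpt hfac
end
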